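/- Let E be an e-variable for P and let δ_E(x,b) = min{1, E(x)/ℓ(b)} be the associated randomized test family. If P({x : E(x) > sup_{b∈ℬ} ℓ(b)}) > 0, then δ_E is not Γ-admissible for any set of adversaries Γ containing all constant maps. -/

import Mathlib

open MeasureTheory
open scoped ENNReal

namespace PostHocTesting

variable {𝒳 : Type*} [MeasurableSpace 𝒳]

/-- The e-value associated to a test family `δ`:
`E_δ(x) = sup_{b ∈ ℬ} ℓ(b) · δ(x,b)`, valued in `ℝ≥0∞`. -/
noncomputable def Esup (ℬ : Set ℝ) (ℓ : ℝ → ℝ) (δ : 𝒳 → ℝ → ℝ) (x : 𝒳) : ℝ≥0∞ :=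
  ⨆ b : ℬ, ENNReal.ofReal (ℓ (b : ℝ) * δ x (b : ℝ))

/-- A (randomized) test family: jointly measurable, `[0,1]`-valued on scenarios,
with measurable associated e-value. -/
def IsTestFamily (ℬ : Set ℝ) (ℓ : ℝ → ℝ) (δ : 𝒳 → ℝ → ℝ) : Prop :=
  Measurable (fun p : 𝒳 × ℝ => δ p.1 p.2) ∧
  (∀ x : 𝒳, ∀ b ∈ ℬ, δ x b ∈ Set.Icc (0 : ℝ) 1) ∧
  Measurable (Esup ℬ ℓ δ)

/-- A binary test family takes only the values 0 and 1. -/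
def IsBinaryTestFamily (ℬ : Set ℝ) (ℓ : ℝ → ℝ) (δ : 𝒳 → ℝ → ℝ) : Prop :=
  IsTestFamily ℬ ℓ δ ∧ ∀ x : 𝒳, ∀ b ∈ ℬ, δ x b = 0 ∨ δ x b = 1

/-- Type-I risk `R_P(δ) = ∫ sup_{b∈ℬ} ℓ(b) δ(x,b) dP(x)`. -/
noncomputable def typeIRisk (P : Measure 𝒳) (ℬ : Set ℝ) (ℓ : ℝ → ℝ)
    (δ : 𝒳 → ℝ → ℝ) : ℝ≥0∞ :=
  ∫⁻ x, Esup ℬ ℓ δ x ∂P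

/-- `δ` is type-I risk safe if `R_P(δ) ≤ 1`. -/
def RiskSafe (P : Measure 𝒳) (ℬ : Set ℝ) (ℓ : ℝ → ℝ) (δ : 𝒳 → ℝ → ℝ) : Prop :=
  typeIRisk P ℬ ℓ δ ≤ 1

/-- Type-II risk of `δ` against the adversary `B`:
`∫ m(B(x)) (1 - δ(x, B(x))) dQ(x)`. -/
noncomputable def typeIIRisk (Q : Measure 𝒳) (m : ℝ → ℝ) (δ : 𝒳 → ℝ → ℝ)
    (B : 𝒳 → ℝ) : ℝ≥0∞ :=
  ∫⁻ x, ENNReal.ofReal (m (B x) * (1 - δ x (B x))) ∂Q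

/-- The set `𝐂` of constant adversaries. -/
def ConstAdv (𝒳 : Type*) (ℬ : Set ℝ) : Set (𝒳 → ℝ) :=
  {B | ∃ b ∈ ℬ, B = fun _ => b}

/-- The set `𝐔` of all measurable adversaries. -/
def AllAdv (𝒳 : Type*) [MeasurableSpace 𝒳] (ℬ : Set ℝ) : Set (𝒳 → ℝ) :=
  {B | Measurable B ∧ ∀ x, B x ∈ ℬ}

/-- `φ` is strictly preferable to `δ` relative to the adversary class `Γ`. -/
def StrictlyPreferable (P Q : Measure 𝒳) (ℬ : Set ℝ) (ℓ m : ℝ → ℝ)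
    (Γ : Set (𝒳 → ℝ)) (φ δ : 𝒳 → ℝ → ℝ) : Prop :=
  RiskSafe P ℬ ℓ φ ∧
  (∀ B ∈ Γ, typeIIRisk Q m φ B ≤ typeIIRisk Q m δ B) ∧
  (∃ B ∈ Γ, typeIIRisk Q m φ B < typeIIRisk Q m δ B)

/-- `Γ`-admissibility among randomized test families. -/
def Admissible (P Q : Measure 𝒳) (ℬ : Set ℝ) (ℓ m : ℝ → ℝ)
    (Γ : Set (𝒳 → ℝ)) (δ : 𝒳 → ℝ → ℝ) : Prop :=
  RiskSafe P ℬ ℓ δ ∧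
  ∀ φ : 𝒳 → ℝ → ℝ, IsTestFamily ℬ ℓ φ → ¬ StrictlyPreferable P Q ℬ ℓ m Γ φ δ

/-- `Γ`-admissibility among binary test families. -/
def AdmissibleBinary (P Q : Measure 𝒳) (ℬ : Set ℝ) (ℓ m : ℝ → ℝ)
    (Γ : Set (𝒳 → ℝ)) (δ : 𝒳 → ℝ → ℝ) : Prop :=
  RiskSafe P ℬ ℓ δ ∧
  ∀ φ : 𝒳 → ℝ → ℝ, IsBinaryTestFamily ℬ ℓ φ → ¬ StrictlyPreferable P Q ℬ ℓ m Γ φ δ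

/-- Likelihood ratio `Λ = dQ/dP`. -/
noncomputable def LR (P Q : Measure 𝒳) (x : 𝒳) : ℝ := (Q.rnDeriv P x).toReal

/-- `P` and `Q` are continuous: the distribution of `Λ` under `P` is atomless. -/
def AtomlessLR (P Q : Measure 𝒳) : Prop := ∀ c : ℝ, P {x | LR P Q x = c} = 0

/-!
An admissible test family spends its whole type-I risk budget. Suppose `δ` has type-I risk at most
`1 - c` with `c > 0`, and let `D = E_δ` be its e-value. The family `δ ⊔ δ_{D + c}` has e-value at
most `D + c`, hence is still type-I risk safe, and it is strictly more powerful than `δ` wherever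
`D < ∞` and `δ < 1`. This happens with positive probability at every scenario of loss at least `1`,
since otherwise the type-I risk of `δ` would already be `1`.

The family `δ_E` has e-value `min (sup ℓ) E`. If `E` exceeds `sup ℓ` with positive probability, the
part of `E` above `sup ℓ` is wasted, and the type-I risk of `δ_E` is less than `1`.
-/

open scoped NNReal

section Evalue

variable {Ω : Type*} {ℬ : Set ℝ} {ℓ : ℝ → ℝ} {δ φ : Ω → ℝ → ℝ} {b : ℝ} {c : ℝ≥0} {x : Ω}

/-- The randomized test family `δ_E` associated to an e-variable `E`. The definition allows every
real-valued `E`, as it is also applied to `E_δ + c`; where `ℓ b = 0` its value is the junk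
value `0`. -/
noncomputable def eTest (ℓ : ℝ → ℝ) (E : Ω → ℝ) (x : Ω) (b : ℝ) : ℝ :=
  min 1 (E x / ℓ b)

theorem eTest_le_one (ℓ : ℝ → ℝ) (E : Ω → ℝ) (x : Ω) (b : ℝ) : eTest ℓ E x b ≤ 1 :=
  min_le_left _ _

theorem ofReal_mul_le_Esup (hb : b ∈ ℬ) : ENNReal.ofReal (ℓ b * δ x b) ≤ Esup ℬ ℓ δ x :=
  le_iSup (fun b : ℬ => ENNReal.ofReal (ℓ b * δ x b)) ⟨b, hb⟩

theorem Esup_sup (hℓ : ∀ b ∈ ℬ, 0 ≤ ℓ b) : Esup ℬ ℓ (δ ⊔ φ) = Esup ℬ ℓ δ ⊔ Esup ℬ ℓ φ := by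
  funext x
  simp only [Esup, Pi.sup_apply, ← iSup_sup_eq]
  refine iSup_congr fun b => ?_
  rw [mul_max_of_nonneg _ _ (hℓ b b.2)]
  exact ENNReal.ofReal_mono.map_max

theorem Esup_eTest (hℓ : ∀ b ∈ ℬ, 0 < ℓ b) (E : Ω → ℝ) :
    Esup ℬ ℓ (eTest ℓ E) =
      fun x => (⨆ b : ℬ, ENNReal.ofReal (ℓ b)) ⊓ ENNReal.ofReal (E x) := by
  funext x
  rw [iSup_inf_eq]
  refine iSup_congr fun b => ?_
  have hℓb := hℓ b b.2
  rw [eTest, mul_min_of_nonneg _ _ hℓb.le, mul_one, mul_div_cancel₀ _ hℓb.ne']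
  exact ENNReal.ofReal_min _ _

/-- The test family `δ ⊔ δ_{E_δ + c}`, which spends a further amount `c` of type-I risk on top of
`δ`. Taking the supremum with `δ` preserves the power of `δ` where `E_δ = ∞`, whose `toReal` is `0`,
and off `ℬ`. -/
noncomputable def topUp (ℬ : Set ℝ) (ℓ : ℝ → ℝ) (δ : Ω → ℝ → ℝ) (c : ℝ≥0) : Ω → ℝ → ℝ :=
  δ ⊔ eTest ℓ fun x => (Esup ℬ ℓ δ x).toReal + c

theorem Esup_topUp_le (hℓ : ∀ b ∈ ℬ, 0 < ℓ b) (δ : Ω → ℝ → ℝ) (c : ℝ≥0) (x : Ω) :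
    Esup ℬ ℓ (topUp ℬ ℓ δ c) x ≤ Esup ℬ ℓ δ x + c := by
  rw [topUp, Esup_sup fun b hb => (hℓ b hb).le, Esup_eTest hℓ]
  refine sup_le le_self_add (inf_le_right.trans (ENNReal.ofReal_add_le.trans ?_))
  rw [ENNReal.ofReal_coe_nnreal]
  gcongr
  exact ENNReal.ofReal_toReal_le

theorem lt_topUp (hb : b ∈ ℬ) (hℓb : 0 < ℓ b) (hc : 0 < c) (hfinite : Esup ℬ ℓ δ x ≠ ⊤)
    (hlt : δ x b < 1) : δ x b < topUp ℬ ℓ δ c x b := by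
  refine lt_sup_of_lt_right (lt_min hlt ((lt_div_iff₀' hℓb).2 ?_))
  calc ℓ b * δ x b ≤ (Esup ℬ ℓ δ x).toReal :=
        (ENNReal.ofReal_le_iff_le_toReal hfinite).1 (ofReal_mul_le_Esup hb)
    _ < (Esup ℬ ℓ δ x).toReal + c := lt_add_of_pos_right _ hc

end Evalue

section Risk

variable {P Q : Measure 𝒳} {ℬ : Set ℝ} {Γ : Set (𝒳 → ℝ)} {ℓ m : ℝ → ℝ} {δ φ ψ : 𝒳 → ℝ → ℝ}
  {E : 𝒳 → ℝ} {b : ℝ} {c : ℝ≥0}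

theorem isTestFamily_eTest (hℓmeas : Measurable ℓ) (hℓ : ∀ b ∈ ℬ, 0 < ℓ b) (hE : Measurable E)
    (hE0 : ∀ x, 0 ≤ E x) : IsTestFamily ℬ ℓ (eTest ℓ E) := by
  refine ⟨?_, fun x b hb => ⟨?_, eTest_le_one ℓ E x b⟩, ?_⟩
  · exact measurable_const.min ((hE.comp measurable_fst).div (hℓmeas.comp measurable_snd))
  · exact le_min zero_le_one (div_nonneg (hE0 x) (hℓ b hb).le)
  · rw [Esup_eTest hℓ]
    exact measurable_const.inf hE.ennreal_ofReal

theorem IsTestFamily.sup (hℓ : ∀ b ∈ ℬ, 0 ≤ ℓ b) (hδ : IsTestFamily ℬ ℓ δ)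
    (hφ : IsTestFamily ℬ ℓ φ) : IsTestFamily ℬ ℓ (δ ⊔ φ) := by
  refine ⟨hδ.1.sup hφ.1, fun x b hb => ?_, ?_⟩
  · exact ⟨le_sup_of_le_left (hδ.2.1 x b hb).1, sup_le (hδ.2.1 x b hb).2 (hφ.2.1 x b hb).2⟩
  · rw [Esup_sup hℓ]
    exact hδ.2.2.sup hφ.2.2

theorem IsTestFamily.topUp (hℓmeas : Measurable ℓ) (hℓ : ∀ b ∈ ℬ, 0 < ℓ b)
    (hδ : IsTestFamily ℬ ℓ δ) (c : ℝ≥0) : IsTestFamily ℬ ℓ (topUp ℬ ℓ δ c) :=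
  hδ.sup (fun b hb => (hℓ b hb).le) <| isTestFamily_eTest hℓmeas hℓ
    (hδ.2.2.ennreal_toReal.add_const _) fun _ => by positivity

theorem typeIIRisk_sup_le (hψ : ∀ x b, ψ x b ≤ 1) (B : 𝒳 → ℝ) :
    typeIIRisk Q m (δ ⊔ ψ) B ≤ typeIIRisk Q m δ B := by
  refine lintegral_mono fun x => ?_
  simp only [Pi.sup_apply]
  rcases le_total (ψ x (B x)) (δ x (B x)) with hψδ | hδψ
  · rw [sup_of_le_left hψδ]
  rw [sup_of_le_right hδψ]
  rcases le_total 0 (m (B x)) with hm | hm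
  · gcongr
  · -- `m` may be negative here: an adversary in `Γ` need not take its values in `ℬ`.
    rw [ENNReal.ofReal_of_nonpos
      (mul_nonpos_of_nonpos_of_nonneg hm (sub_nonneg.2 (hψ x (B x))))]
    exact zero_le

theorem typeIIRisk_const_lt [IsFiniteMeasure Q] (hm : 0 < m b) (hδ : Measurable fun x => δ x b)
    (hφ : ∀ x, φ x b ∈ Set.Icc (0 : ℝ) 1) (hδφ : ∀ x, δ x b ≤ φ x b)
    (hlt : ∃ᵐ x ∂Q, δ x b < φ x b) :
    typeIIRisk Q m φ (fun _ => b) < typeIIRisk Q m δ (fun _ => b) := by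
  have hfinite : typeIIRisk Q m φ (fun _ => b) ≠ ⊤ := by
    refine ((lintegral_mono fun x => ENNReal.ofReal_le_ofReal ?_).trans_lt
      (lintegral_const_lt_top (c := ENNReal.ofReal (m b)) ENNReal.ofReal_ne_top)).ne
    exact mul_le_of_le_one_right hm.le (sub_le_self _ (hφ x).1)
  refine lintegral_strict_mono_of_ae_le_of_frequently_ae_lt
    (measurable_const.mul (measurable_const.sub hδ)).ennreal_ofReal.aemeasurable hfinite
    (.of_forall fun x => ENNReal.ofReal_le_ofReal ?_)
    (hlt.mono fun x hx => ((ENNReal.ofReal_lt_ofReal_iff ?_).2 ?_).ne)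
  · exact mul_le_mul_of_nonneg_left (sub_le_sub_left (hδφ x) 1) hm.le
  · exact mul_pos hm (sub_pos.2 (hx.trans_le (hφ x).2))
  · exact mul_lt_mul_of_pos_left (sub_lt_sub_left hx 1) hm

theorem typeIRisk_eTest_lt_lintegral (hℓ : ∀ b ∈ ℬ, 0 < ℓ b) (hE : Measurable E)
    (hEfin : ∫⁻ x, ENNReal.ofReal (E x) ∂P ≠ ⊤)
    (hbig : 0 < P {x | (⨆ b : ℬ, ENNReal.ofReal (ℓ b)) < ENNReal.ofReal (E x)}) :
    typeIRisk P ℬ ℓ (eTest ℓ E) < ∫⁻ x, ENNReal.ofReal (E x) ∂P := by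
  rw [typeIRisk, Esup_eTest hℓ]
  refine lintegral_strict_mono_of_ae_le_of_frequently_ae_lt hE.ennreal_ofReal.aemeasurable
    (ne_top_of_le_ne_top hEfin (lintegral_mono fun _ => inf_le_right))
    (.of_forall fun _ => inf_le_right) ?_
  exact (frequently_ae_iff.2 hbig.ne').mono fun _ hx => (inf_le_left.trans_lt hx).ne

theorem typeIRisk_topUp_le (P : Measure 𝒳) (hℓ : ∀ b ∈ ℬ, 0 < ℓ b) (δ : 𝒳 → ℝ → ℝ) (c : ℝ≥0) :
    typeIRisk P ℬ ℓ (topUp ℬ ℓ δ c) ≤ typeIRisk P ℬ ℓ δ + c * P Set.univ := by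
  calc typeIRisk P ℬ ℓ (topUp ℬ ℓ δ c) ≤ ∫⁻ x, (Esup ℬ ℓ δ x + c) ∂P :=
        lintegral_mono (Esup_topUp_le hℓ δ c)
    _ = typeIRisk P ℬ ℓ δ + c * P Set.univ := by
        rw [lintegral_add_right _ measurable_const, lintegral_const, typeIRisk]

theorem frequently_lt_one_of_typeIRisk_lt_one [IsProbabilityMeasure P] (hb : b ∈ ℬ)
    (hℓb : 1 ≤ ℓ b) (hrisk : typeIRisk P ℬ ℓ δ < 1) : ∃ᵐ x ∂P, δ x b < 1 := by
  intro hone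
  refine hrisk.not_ge ?_
  calc (1 : ℝ≥0∞) = ∫⁻ _, 1 ∂P := by simp
    _ ≤ ∫⁻ x, Esup ℬ ℓ δ x ∂P := lintegral_mono_ae ?_
  filter_upwards [hone] with x hx
  calc (1 : ℝ≥0∞) ≤ ENNReal.ofReal (ℓ b * δ x b) :=
        ENNReal.one_le_ofReal.2 (one_le_mul_of_one_le_of_one_le hℓb (not_lt.1 hx))
    _ ≤ Esup ℬ ℓ δ x := ofReal_mul_le_Esup hb

theorem typeIIRisk_topUp_const_lt [IsProbabilityMeasure P] [IsFiniteMeasure Q] (hPQ : P ≪ Q)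
    (hℓmeas : Measurable ℓ) (hℓ : ∀ b ∈ ℬ, 0 < ℓ b) (hδ : IsTestFamily ℬ ℓ δ)
    (hrisk : typeIRisk P ℬ ℓ δ < 1) (hc : 0 < c) (hb : b ∈ ℬ) (hℓb : 1 ≤ ℓ b) (hm : 0 < m b) :
    typeIIRisk Q m (topUp ℬ ℓ δ c) (fun _ => b) < typeIIRisk Q m δ (fun _ => b) := by
  have hfinite : ∀ᵐ x ∂P, Esup ℬ ℓ δ x < ⊤ :=
    ae_lt_top hδ.2.2 (hrisk.trans ENNReal.one_lt_top).ne
  have hlt : ∃ᵐ x ∂P, δ x b < topUp ℬ ℓ δ c x b :=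
    ((frequently_lt_one_of_typeIRisk_lt_one hb hℓb hrisk).and_eventually hfinite).mono
      fun _ hx => lt_topUp hb (hℓ b hb) hc hx.2.ne hx.1
  exact typeIIRisk_const_lt hm (hδ.1.comp measurable_prodMk_right)
    (fun x => (hδ.topUp hℓmeas hℓ c).2.1 x b hb) (fun _ => le_sup_left)
    (hlt.filter_mono hPQ.ae_le)

theorem not_admissible_of_typeIRisk_lt_one [IsProbabilityMeasure P] [IsFiniteMeasure Q]
    (hPQ : P ≪ Q) (hℓmeas : Measurable ℓ) (hℓ : ∀ b ∈ ℬ, 0 < ℓ b) (hδ : IsTestFamily ℬ ℓ δ)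
    (hrisk : typeIRisk P ℬ ℓ δ < 1) (hb : b ∈ ℬ) (hℓb : 1 ≤ ℓ b) (hm : 0 < m b)
    (hΓ : (fun _ => b) ∈ Γ) : ¬ Admissible P Q ℬ ℓ m Γ δ := by
  rintro ⟨-, hadm⟩
  obtain ⟨c, hc, hslack⟩ := ENNReal.lt_iff_exists_add_pos_lt.1 hrisk
  refine hadm (topUp ℬ ℓ δ c) (hδ.topUp hℓmeas hℓ c)
    ⟨(typeIRisk_topUp_le P hℓ δ c).trans ?_, fun B _ => ?_, fun _ => b, hΓ, ?_⟩
  · simpa only [measure_univ, mul_one] using hslack.le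
  · exact typeIIRisk_sup_le (eTest_le_one ℓ _) B
  · exact typeIIRisk_topUp_const_lt hPQ hℓmeas hℓ hδ hrisk hc hb hℓb hm

theorem stmt5_general [IsProbabilityMeasure P] [IsFiniteMeasure Q] (hPQ : P ≪ Q)
    (hℓmeas : Measurable ℓ) (hℓ : ∀ b ∈ ℬ, 0 < ℓ b) (hE : Measurable E) (hE0 : ∀ x, 0 ≤ E x)
    (hEev : ∫⁻ x, ENNReal.ofReal (E x) ∂P ≤ 1)
    (hbig : 0 < P {x | (⨆ b : ℬ, ENNReal.ofReal (ℓ b)) < ENNReal.ofReal (E x)})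
    (hb : b ∈ ℬ) (hℓb : 1 ≤ ℓ b) (hm : 0 < m b) (hΓ : (fun _ => b) ∈ Γ) :
    ¬ Admissible P Q ℬ ℓ m Γ (eTest ℓ E) := by
  have hrisk : typeIRisk P ℬ ℓ (eTest ℓ E) < 1 :=
    (typeIRisk_eTest_lt_lintegral hℓ hE (ne_top_of_le_ne_top ENNReal.one_ne_top hEev) hbig).trans_le
      hEev
  exact not_admissible_of_typeIRisk_lt_one hPQ hℓmeas hℓ (isTestFamily_eTest hℓmeas hℓ hE hE0)
    hrisk hb hℓb hm hΓ

end Risk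

/-- if the e-variable `E` exceeds `sup_{b∈ℬ} ℓ(b)` with positive
`P`-probability, then the associated randomized test family
`δ_E(x,b) = min{1, E(x)/ℓ(b)}` is `Γ`-inadmissible for every `Γ ⊇ 𝐂`. -/
theorem stmt5
    [StandardBorelSpace 𝒳]
    (P Q : Measure 𝒳) [IsProbabilityMeasure P] [IsProbabilityMeasure Q]
    (hPQ : P ≪ Q) (hQP : Q ≪ P)
    (ℬ : Set ℝ) (hℬne : ℬ.Nonempty)
    (ℓ : ℝ → ℝ) (hℓmeas : Measurable ℓ) (hℓpos : ∀ b ∈ ℬ, 0 < ℓ b)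
    (hℓmono : ∀ b₁ ∈ ℬ, ∀ b₂ ∈ ℬ, b₁ ≤ b₂ → ℓ b₁ ≤ ℓ b₂)
    (hℓgt1 : ∃ b ∈ ℬ, 1 < ℓ b)
    (m : ℝ → ℝ) (hm : ∀ b ∈ ℬ, 0 < m b)
    (E : 𝒳 → ℝ) (hEmeas : Measurable E) (hEnn : ∀ x, 0 ≤ E x)
    (hEev : ∫⁻ x, ENNReal.ofReal (E x) ∂P ≤ 1)
    (hbig : 0 < P {x | (⨆ b : ℬ, ENNReal.ofReal (ℓ (b : ℝ))) < ENNReal.ofReal (E x)}) :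
    ∀ Γ : Set (𝒳 → ℝ), ConstAdv 𝒳 ℬ ⊆ Γ →
      ¬ Admissible P Q ℬ ℓ m Γ (fun x b => min 1 (E x / ℓ b)) := by
  intro Γ hΓ
  obtain ⟨b, hb, hℓb⟩ := hℓgt1
  exact stmt5_general hPQ hℓmeas hℓpos hEmeas hEnn hEev hbig hb hℓb.le (hm b hb) (hΓ ⟨b, hb, rfl⟩)

end PostHocTesting
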